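/- arXiv:2004.04496 — 2 statements merged into one kernel-verified Lean document; each statement's English description precedes it below -/
import Mathlib

section
/- Let (V, E, w) be a weighted directed graph with nonnegative edge weights and let r ∈ V. Let X be a random variable with exponential distribution of rate λ > 0, and for each outcome let B(X) = {v ∈ V : dist_E(r, v) ≤ X} and E_Sep(X) = {(u, v) ∈ E : u ∈ B(X), v ∉ B(X)}. Then for every edge (u, v) ∈ E, P[(u, v) ∈ E_Sep(X)] ≤ λ · w(u, v) · P[dist_E(r, u) ≤ X]. -/
/-- A walk from `s` to `t` of length `k` using only edges in `E`,
given by its sequence of vertices `v`. -/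
def IsWalkFrom {V : Type*} (E : Set (V × V)) (s t : V) (k : ℕ) (v : ℕ → V) : Prop :=
  v 0 = s ∧ v k = t ∧ ∀ i < k, (v i, v (i + 1)) ∈ E

/-- The distance from `s` to `t`: the infimum in `ℝ≥0∞` of the weights of walks
from `s` to `t` (so `∞` if no walk exists). -/
noncomputable def wdist {V : Type*} (E : Set (V × V)) (w : V → V → ℝ) (s t : V) : ENNReal :=
  sInf {c : ENNReal | ∃ (k : ℕ) (v : ℕ → V), IsWalkFrom E s t k v ∧
    c = ENNReal.ofReal (∑ i ∈ Finset.range k, w (v i) (v (i + 1)))}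

open MeasureTheory ProbabilityTheory

theorem wdist_edge_le {V : Type*} (E : Set (V × V)) (w : V → V → ℝ)
    (hw : ∀ e ∈ E, 0 ≤ w e.1 e.2) (r u v : V) (huv : (u, v) ∈ E) :
    wdist E w r v ≤ wdist E w r u + ENNReal.ofReal (w u v) := by
  classical
  conv_rhs => rw [wdist]
  rw [ENNReal.sInf_add]
  refine le_iInf₂ ?_
  rintro c ⟨k, p, ⟨h0, hk, hE⟩, rfl⟩
  rw [← ENNReal.ofReal_add (Finset.sum_nonneg fun i hi => hw _ (hE i (Finset.mem_range.1 hi)))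
    (hw _ huv)]
  refine sInf_le ⟨k + 1, fun i => if i ≤ k then p i else v, ⟨?_, ?_, ?_⟩, ?_⟩
  · simpa using h0
  · simp
  · intro i hi
    rcases Nat.lt_succ_iff_lt_or_eq.1 hi with h | h
    · have h1 : i ≤ k := h.le
      have h2 : i + 1 ≤ k := h
      simpa [h1, h2] using hE i h
    · subst h
      simpa [hk] using huv
  · rw [Finset.sum_range_succ]
    congr 2
    · refine Finset.sum_congr rfl fun i hi => ?_
      have h := Finset.mem_range.1 hi
      have h1 : i ≤ k := h.le
      have h2 : i + 1 ≤ k := h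
      simp [h1, h2]
    · simp [hk]

theorem expMeasure_Iio_zero (lam : ℝ) : expMeasure lam (Set.Iio 0) = 0 := by
  rw [expMeasure, gammaMeasure, withDensity_apply _ measurableSet_Iio]
  exact lintegral_gammaPDF_of_nonpos le_rfl

theorem expMeasure_Ico_le {lam : ℝ} (hlam : 0 < lam) (a c : ℝ) (ha : 0 ≤ a) (hc : 0 ≤ c) :
    expMeasure lam (Set.Ico a (a + c)) ≤
      ENNReal.ofReal (lam * c) * ENNReal.ofReal (Real.exp (-(lam * a))) := by
  rw [expMeasure, gammaMeasure, withDensity_apply _ measurableSet_Ico]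
  calc _ ≤ ∫⁻ x in Set.Ico a (a + c), ENNReal.ofReal (lam * Real.exp (-(lam * a))) := by
        refine setLIntegral_mono' measurableSet_Ico fun x hx => ?_
        change exponentialPDF lam x ≤ _
        rw [exponentialPDF_of_nonneg (ha.trans hx.1)]
        have := hx.1
        gcongr
    _ = _ := by
        rw [setLIntegral_const, Real.volume_Ico, ← ENNReal.ofReal_mul (by positivity),
          ← ENNReal.ofReal_mul (by positivity)]
        congr 1
        ring

theorem le_expMeasure_Ici {lam : ℝ} (hlam : 0 < lam) (a : ℝ) (ha : 0 ≤ a) :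
    ENNReal.ofReal (Real.exp (-(lam * a))) ≤ expMeasure lam (Set.Ici a) := by
  have := isProbabilityMeasure_expMeasure hlam
  refine le_trans ?_ (measure_mono Set.Ioi_subset_Ici_self)
  have h1 := cdf_expMeasure_eq hlam a
  rw [if_pos ha, cdf_eq_real] at h1
  have h2 := probReal_compl_eq_one_sub (μ := expMeasure lam) (measurableSet_Iic (a := a))
  rw [Set.compl_Iic, h1, sub_sub_cancel] at h2
  rw [← h2, ofReal_measureReal]

/-- Grow a ball of exponentially distributed random radius `X` (rate
`λ > 0`) around `r`, and cut the edges leaving the ball. Then for every edge `(u, v)`,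
`P[(u, v) cut] ≤ λ · w(u, v) · P[dist_E(r, u) ≤ X]`. -/
theorem prob_edge_cut_le
    {V : Type*} [Fintype V] {Ω : Type*} [MeasurableSpace Ω]
    (P : Measure Ω) [IsProbabilityMeasure P]
    (E : Set (V × V)) (w : V → V → ℝ) (hw : ∀ e ∈ E, 0 ≤ w e.1 e.2) (r : V)
    (lam : ℝ) (hlam : 0 < lam)
    (X : Ω → ℝ) (hX : Measurable X) (hXdist : P.map X = expMeasure lam)
    (B : ℝ → Set V) (hB : ∀ x : ℝ, B x = {v | wdist E w r v ≤ ENNReal.ofReal x})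
    (ESep : ℝ → Set (V × V))
    (hESep : ∀ x : ℝ, ESep x = {e | e ∈ E ∧ e.1 ∈ B x ∧ e.2 ∉ B x})
    (u v : V) (huv : (u, v) ∈ E) :
    P {ω | (u, v) ∈ ESep (X ω)}
      ≤ ENNReal.ofReal (lam * w u v) * P {ω | wdist E w r u ≤ ENNReal.ofReal (X ω)} := by
  have hw0 : 0 ≤ w u v := hw _ huv
  have htri := wdist_edge_le E w hw r u v huv
  have hset : {ω | (u, v) ∈ ESep (X ω)} ⊆ {ω | wdist E w r u ≤ ENNReal.ofReal (X ω) ∧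
      ENNReal.ofReal (X ω) < wdist E w r v} := by
    intro ω hω
    simp only [Set.mem_setOf_eq, hESep, hB, not_le] at hω
    exact hω.2
  refine (measure_mono hset).trans ?_
  by_cases htop : wdist E w r u = ⊤
  · simp [htop]
  obtain ⟨a, ha, hau⟩ : ∃ a : ℝ, 0 ≤ a ∧ wdist E w r u = ENNReal.ofReal a :=
    ⟨_, ENNReal.toReal_nonneg, (ENNReal.ofReal_toReal htop).symm⟩
  rw [hau, ← ENNReal.ofReal_add ha hw0] at htri
  rw [hau]
  calc _ ≤ P (X ⁻¹' (Set.Iio 0 ∪ Set.Ico a (a + w u v))) := by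
        refine measure_mono ?_
        rintro ω ⟨h1, h2⟩
        rcases lt_or_ge (X ω) 0 with h | h
        · exact Or.inl h
        · exact Or.inr ⟨(ENNReal.ofReal_le_ofReal_iff h).1 h1,
            (ENNReal.ofReal_lt_ofReal_iff_of_nonneg h).1 (h2.trans_le htri)⟩
    _ = expMeasure lam (Set.Iio 0 ∪ Set.Ico a (a + w u v)) := by
        rw [← hXdist, Measure.map_apply hX (measurableSet_Iio.union measurableSet_Ico)]
    _ ≤ expMeasure lam (Set.Iio 0) + expMeasure lam (Set.Ico a (a + w u v)) :=
        measure_union_le _ _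
    _ ≤ ENNReal.ofReal (lam * w u v) * ENNReal.ofReal (Real.exp (-(lam * a))) := by
        rw [expMeasure_Iio_zero, zero_add]
        exact expMeasure_Ico_le hlam a _ ha hw0
    _ ≤ ENNReal.ofReal (lam * w u v) * expMeasure lam (Set.Ici a) := by
        gcongr
        exact le_expMeasure_Ici hlam a ha
    _ = ENNReal.ofReal (lam * w u v) * P (X ⁻¹' Set.Ici a) := by
        rw [← hXdist, Measure.map_apply hX measurableSet_Ici]
    _ ≤ _ := by
        gcongr
        intro ω hω
        exact ENNReal.ofReal_le_ofReal hω
end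

section
/- Let (V, E, w) be a weighted directed graph with nonnegative edge weights on n = |V| vertices, let 𝒱 be a partition of V, and let η ≥ 0. Suppose every part X ∈ 𝒱 has weak diameter at most |X|·η/n, i.e. for all x, y ∈ X there is a walk in G from x to y of weight at most |X|·η/n. Let Y_0, Y_1, …, Y_m ∈ 𝒱 be pairwise distinct parts, let s ∈ Y_0 and t ∈ Y_m, and for each 1 ≤ i ≤ m let (a_i, b_i) ∈ E be an edge with a_i ∈ Y_{i−1} and b_i ∈ Y_i. Then there is a walk in G from s to t of weight at most Σ_{i=1}^m w(a_i, b_i) + η. -/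
theorem walk_trans_aux {V : Type*} (E : Set (V × V)) (w : V → V → ℝ) (x y z : V) (c d : ℝ)
    (h1 : ∃ (k : ℕ) (p : ℕ → V), IsWalkFrom E x y k p ∧
      (∑ i ∈ Finset.range k, w (p i) (p (i + 1))) ≤ c)
    (h2 : ∃ (k : ℕ) (p : ℕ → V), IsWalkFrom E y z k p ∧
      (∑ i ∈ Finset.range k, w (p i) (p (i + 1))) ≤ d) :
    ∃ (k : ℕ) (p : ℕ → V), IsWalkFrom E x z k p ∧
      (∑ i ∈ Finset.range k, w (p i) (p (i + 1))) ≤ c + d := by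
  obtain ⟨k, p, ⟨p0, pk, pE⟩, hp⟩ := h1
  obtain ⟨l, q, ⟨q0, ql, qE⟩, hq⟩ := h2
  have e1 : ∀ i ≤ k, (fun i => if i < k then p i else q (i - k)) i = p i := by
    intro i hi
    rcases hi.lt_or_eq with h | h
    · simp [h]
    · subst h; simp [q0, pk]
  have e2 : ∀ i, (fun i => if i < k then p i else q (i - k)) (k + i) = q i := by
    intro i
    simp
  generalize (fun i => if i < k then p i else q (i - k)) = r at e1 e2
  refine ⟨k + l, r, ⟨?_, ?_, ?_⟩, ?_⟩
  · rw [e1 0 (Nat.zero_le _), p0]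
  · rw [e2, ql]
  · intro i hi
    by_cases h : i < k
    · rw [e1 i h.le, e1 (i + 1) h]
      exact pE i h
    · obtain ⟨j, rfl⟩ := Nat.exists_eq_add_of_le (not_lt.mp h)
      rw [add_assoc, e2, e2]
      exact qE j (by omega)
  · rw [Finset.sum_range_add]
    refine add_le_add (le_trans (le_of_eq ?_) hp) (le_trans (le_of_eq ?_) hq)
    · refine Finset.sum_congr rfl fun i hi => ?_
      have h := Finset.mem_range.mp hi
      rw [e1 i h.le, e1 (i + 1) h]
    · refine Finset.sum_congr rfl fun i _ => ?_
      rw [add_assoc, e2, e2]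

/-- Suppose every part `X` of the partition `𝒱` has weak diameter at
most `|X| η / n`. If `Y_0, …, Y_m` are pairwise distinct parts, `s ∈ Y_0`, `t ∈ Y_m`,
and `(a_i, b_i)` is an edge with `a_i ∈ Y_{i-1}` and `b_i ∈ Y_i` for `1 ≤ i ≤ m`, then
there is a walk from `s` to `t` of weight at most `Σ_{i=1}^m w(a_i, b_i) + η`. -/
theorem walk_through_low_diameter_parts
    {V : Type*} [Fintype V] (E : Set (V × V)) (w : V → V → ℝ)
    (hw : ∀ e ∈ E, 0 ≤ w e.1 e.2)
    (𝒱 : Set (Set V)) (hpart : Setoid.IsPartition 𝒱)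
    (η : ℝ) (hη : 0 ≤ η)
    (hdiam : ∀ X ∈ 𝒱, ∀ x ∈ X, ∀ y ∈ X,
      ∃ (k : ℕ) (p : ℕ → V), IsWalkFrom E x y k p ∧
        (∑ i ∈ Finset.range k, w (p i) (p (i + 1)))
          ≤ (X.ncard : ℝ) * η / (Fintype.card V : ℝ))
    (m : ℕ) (Y : ℕ → Set V) (hY : ∀ i ≤ m, Y i ∈ 𝒱)
    (hdistinct : ∀ i ≤ m, ∀ j ≤ m, i ≠ j → Y i ≠ Y j)
    (s t : V) (hs : s ∈ Y 0) (ht : t ∈ Y m)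
    (a b : ℕ → V)
    (hab : ∀ i, 1 ≤ i → i ≤ m → (a i, b i) ∈ E ∧ a i ∈ Y (i - 1) ∧ b i ∈ Y i) :
    ∃ (k : ℕ) (p : ℕ → V), IsWalkFrom E s t k p ∧
      (∑ i ∈ Finset.range k, w (p i) (p (i + 1)))
        ≤ (∑ i ∈ Finset.Icc 1 m, w (a i) (b i)) + η := by
  have key : ∀ j ≤ m, ∀ y ∈ Y j, ∃ (k : ℕ) (p : ℕ → V), IsWalkFrom E s y k p ∧
      (∑ i ∈ Finset.range k, w (p i) (p (i + 1)))
        ≤ (∑ i ∈ Finset.Icc 1 j, w (a i) (b i)) +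
          ∑ i ∈ Finset.range (j + 1), ((Y i).ncard : ℝ) * η / (Fintype.card V : ℝ) := by
    intro j
    induction j with
    | zero =>
      intro hj y hy
      simpa using hdiam _ (hY 0 hj) s hs y hy
    | succ j ih =>
      intro hj y hy
      obtain ⟨hE, ha, hb⟩ := hab (j + 1) (by omega) hj
      have h1 := ih (by omega) (a (j + 1)) (by simpa using ha)
      have h2 : ∃ (k : ℕ) (p : ℕ → V), IsWalkFrom E (a (j + 1)) (b (j + 1)) k p ∧
          (∑ i ∈ Finset.range k, w (p i) (p (i + 1))) ≤ w (a (j + 1)) (b (j + 1)) := by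
        refine ⟨1, fun i => if i = 0 then a (j + 1) else b (j + 1), ⟨by simp, by simp, ?_⟩,
          by simp⟩
        intro i hi
        obtain rfl : i = 0 := by omega
        simpa using hE
      have h3 := hdiam _ (hY (j + 1) hj) _ hb y hy
      obtain ⟨k, p, hp, hle⟩ := walk_trans_aux E w _ _ _ _ _ (walk_trans_aux E w _ _ _ _ _ h1 h2) h3
      refine ⟨k, p, hp, hle.trans (le_of_eq ?_)⟩
      rw [Finset.sum_Icc_succ_top (by omega), Finset.sum_range_succ _ (j + 1)]
      ring
  obtain ⟨k, p, hp, hle⟩ := key m le_rfl t ht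
  refine ⟨k, p, hp, hle.trans (add_le_add le_rfl ?_)⟩
  have hcard : ∑ i ∈ Finset.range (m + 1), (Y i).ncard ≤ Fintype.card V := by
    classical
    have hd : ((Finset.range (m + 1) : Finset ℕ) : Set ℕ).PairwiseDisjoint
        (fun i => (Y i).toFinset) := by
      intro i hi j hj hij
      have hi' : i ≤ m := by simpa [Nat.lt_succ_iff] using hi
      have hj' : j ≤ m := by simpa [Nat.lt_succ_iff] using hj
      have := hpart.pairwiseDisjoint (hY i hi') (hY j hj') (hdistinct i hi' j hj' hij)
      simpa [Function.onFun] using this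
    calc ∑ i ∈ Finset.range (m + 1), (Y i).ncard
        = ∑ i ∈ Finset.range (m + 1), (Y i).toFinset.card :=
          Finset.sum_congr rfl fun i _ => Set.ncard_eq_toFinset_card' _
      _ = ((Finset.range (m + 1)).biUnion fun i => (Y i).toFinset).card :=
          (Finset.card_biUnion hd).symm
      _ ≤ Fintype.card V := Finset.card_le_univ _
  have hpos : (0 : ℝ) < Fintype.card V := by
    exact_mod_cast Fintype.card_pos_iff.mpr ⟨s⟩
  rw [← Finset.sum_div, ← Finset.sum_mul, div_le_iff₀ hpos, mul_comm η]
  refine mul_le_mul_of_nonneg_right ?_ hη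
  exact_mod_cast hcard
end
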